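/- Let A be an abelian category such that D(A) has Hom sets and coproducts, let T be an n-tilting object of A, and let H_T = T^{⊥>0} ∩ T^{⊥<0} be the heart of the associated t-structure on D(A). Then the class Y = ⋂_{k>0} Ker(Ext^k_A(T, ?)) coincides with A ∩ H_T (objects of A lying in the heart), Y is a cogenerating class of A, and every object M of A admits an exact sequence 0 → M → Y → T^1 → ⋯ → T^n → 0 with Y ∈ Y and each T^k ∈ Add(T). -/

import Mathlib

open CategoryTheory CategoryTheory.Limits CategoryTheory.Pretriangulated

universe w v u

variable {A : Type u} [Category.{v} A] [Abelian A] [HasCoproducts.{v} A]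
  [HasDerivedCategory.{w} A] [HasCoproducts.{v} (DerivedCategory A)] (T : A)

/-- `Add(T)`: direct summands of set-indexed coproducts of copies of `T` in `A`. -/
def addT : Set A :=
  {X | ∃ (I : Type v) (s : X ⟶ ∐ (fun _ : I => T)) (r : ∐ (fun _ : I => T) ⟶ X), s ≫ r = 𝟙 X}

/-- `Y = ⋂_{k>0} Ker(Ext^k_A(T, ?))`, with `Ext` computed as morphisms in the derived
category. -/
def YSet : Set A :=
  {N | ∀ k : ℤ, 0 < k → ∀ f : (DerivedCategory.singleFunctor A 0).obj T ⟶
    ((DerivedCategory.singleFunctor A 0).obj N)⟦k⟧, f = 0}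

/-- An exact sequence `0 → G → T^0 → ⋯ → T^n → 0` with all `T^k` in `Add(T)`. -/
def hasAddTCoresolution (n : ℕ) (G : A) : Prop :=
  ∃ S : ComposableArrows A (n + 1), S.Exact ∧ Mono (S.map' 0 1) ∧ Epi (S.map' n (n + 1)) ∧
    S.obj' 0 = G ∧ ∀ (i : ℕ) (_ : 1 ≤ i) (h2 : i ≤ n + 1), S.obj' i ∈ addT T

namespace Tilt

set_option linter.unusedSectionVars false

open DerivedCategory

/-- Iterated short exact sequences `C → T' → C'` with `T'` in `Add(T)`. -/
def FilA : ℕ → A → Prop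
  | 0, C => IsZero C
  | k + 1, C => ∃ (T' C' : A) (f : C ⟶ T') (g : T' ⟶ C') (w : f ≫ g = 0),
      T' ∈ addT T ∧ (ShortComplex.mk f g w).ShortExact ∧ FilA k C'

/-- The derived category version. -/
def FilD : ℕ → ℤ → DerivedCategory A → Prop
  | 0, _, C => IsZero C
  | k + 1, a, C => ∃ (T' : A) (W E : DerivedCategory A) (u' : W ⟶ C) (v' : C ⟶ E)
      (w' : E ⟶ W⟦(1 : ℤ)⟧), T' ∈ addT T ∧ Nonempty (E ≅ (singleFunctor A a).obj T') ∧
      Triangle.mk u' v' w' ∈ distTriang (DerivedCategory A) ∧ FilD k (a + 1) W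

lemma addT_of_iso {X Y : A} (e : X ≅ Y) (h : X ∈ addT T) : Y ∈ addT T := by
  obtain ⟨I, s, r, hs⟩ := h
  exact ⟨I, e.inv ≫ s, r ≫ e.hom, by simp [reassoc_of% hs]⟩

lemma isZero_of_iso_single {a : ℤ} {X : DerivedCategory A} {C : A} (e : X ≅ (singleFunctor A a).obj C)
    (h : IsZero X) : IsZero C := by
  rw [IsZero.iff_id_eq_zero]
  apply (singleFunctor A a).map_injective
  exact (h.of_iso e.symm).eq_of_src _ _

/-- shifting -/
lemma exists_of_shift {Z : A} {X : DerivedCategory A} (n a a' : ℤ) (h : n + a = a')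
    (g : (singleFunctor A a).obj Z ⟶ X⟦n⟧) :
    ∃ f : (singleFunctor A a').obj Z ⟶ X,
      g = ((singleFunctors A).shiftIso n a a' h).inv.app Z ≫ f⟦n⟧' := by
  obtain ⟨f, hf⟩ := (shiftFunctor (DerivedCategory A) n).map_surjective
    (((singleFunctors A).shiftIso n a a' h).hom.app Z ≫ g)
  refine ⟨f, ?_⟩
  rw [hf]
  simp

lemma zero_of_shift {Z : A} {X : DerivedCategory A} (n a a' : ℤ) (h : n + a = a')
    (H : ∀ f : (singleFunctor A a').obj Z ⟶ X, f = 0)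
    (g : (singleFunctor A a).obj Z ⟶ X⟦n⟧) : g = 0 := by
  obtain ⟨f, rfl⟩ := exists_of_shift n a a' h g
  rw [H f]; simp

lemma zero_of_unshift {Z : A} {X : DerivedCategory A} (n a a' : ℤ) (h : n + a = a')
    (H : ∀ g : (singleFunctor A a).obj Z ⟶ X⟦n⟧, g = 0)
    (f : (singleFunctor A a').obj Z ⟶ X) : f = 0 := by
  apply (shiftFunctor (DerivedCategory A) n).map_injective
  have := H (((singleFunctors A).shiftIso n a a' h).inv.app Z ≫ f⟦n⟧')
  rw [← cancel_epi (((singleFunctors A).shiftIso n a a' h).inv.app Z)]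
  simpa using this

lemma small_of_shift {Z : A} {X : DerivedCategory A} (n a a' : ℤ) (h : n + a = a')
    (H : Small.{v} ((singleFunctor A a').obj Z ⟶ X)) :
    Small.{v} ((singleFunctor A a).obj Z ⟶ X⟦n⟧) :=
  small_of_surjective (f := fun f : (singleFunctor A a').obj Z ⟶ X =>
    ((singleFunctors A).shiftIso n a a' h).inv.app Z ≫ f⟦n⟧')
    (fun g => by obtain ⟨f, hf⟩ := exists_of_shift n a a' h g; exact ⟨f, hf.symm⟩)

lemma small_triangle {D : Type*} [Category.{w} D] [Preadditive D] [HasZeroObject D] [HasShift D ℤ]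
    [∀ n : ℤ, (shiftFunctor D n).Additive] [Pretriangulated D] (Z : D)
    (Tr : Triangle D) (hT : Tr ∈ distTriang D)
    (h1 : Small.{v} (Z ⟶ Tr.obj₁)) (h3 : Small.{v} (Z ⟶ Tr.obj₃)) : Small.{v} (Z ⟶ Tr.obj₂) := by
  classical
  let R := {c : Z ⟶ Tr.obj₃ // ∃ b : Z ⟶ Tr.obj₂, b ≫ Tr.mor₂ = c}
  have : Small.{v} R := inferInstance
  refine small_of_surjective (f := fun (p : (Z ⟶ Tr.obj₁) × R) => p.1 ≫ Tr.mor₁ + p.2.2.choose) ?_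
  intro b
  let c : R := ⟨b ≫ Tr.mor₂, b, rfl⟩
  obtain ⟨g, hg⟩ := Triangle.coyoneda_exact₂ _ hT (b - c.2.choose)
    (by rw [Preadditive.sub_comp, c.2.choose_spec, sub_self])
  exact ⟨(g, c), by simp [← hg]⟩

lemma isLE_of_hom_zero (𝒢 : Set A) (h𝒢 : ∀ M : A, ∃ G ∈ 𝒢, ∃ p : G ⟶ M, Epi p)
    (X : DerivedCategory A)
    (H : ∀ G ∈ 𝒢, ∀ m : ℤ, 0 < m → ∀ f : (singleFunctor A m).obj G ⟶ X, f = 0) : X.IsLE 0 := by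
  obtain ⟨K, ⟨e⟩⟩ : ∃ K, Nonempty (Q.obj K ≅ X) := ⟨_, ⟨Q.objObjPreimageIso X⟩⟩
  rw [isLE_iff]
  intro m hm
  obtain ⟨G, hG, p, hp⟩ := h𝒢 (K.cycles m)
  let φ : (HomologicalComplex.single A (ComplexShape.up ℤ) m).obj G ⟶ K :=
    HomologicalComplex.mkHomFromSingle (p ≫ K.iCycles m) (by intros; simp)
  have h0 : Q.map φ = 0 := by
    rw [← cancel_mono e.hom, zero_comp]
    exact H G hG m hm _
  have h1 : HomologicalComplex.homologyMap φ m = 0 := by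
    have := (homologyFunctorFactors A m).hom.naturality φ
    simp only [Functor.comp_map, h0, Functor.map_zero, zero_comp] at this
    exact (cancel_epi ((homologyFunctorFactors A m).hom.app _)).1 (this.symm.trans comp_zero.symm)
  have h2 : (HomologicalComplex.singleObjCyclesSelfIso (ComplexShape.up ℤ) m G).inv ≫
      HomologicalComplex.cyclesMap φ m = p := by
    rw [← cancel_mono (K.iCycles m)]
    simp [φ]
  have h3 : p ≫ K.homologyπ m = 0 := by
    rw [← h2, Category.assoc, ← HomologicalComplex.homologyπ_naturality, h1]
    simp
  have h4 : IsZero (K.homology m) := by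
    rw [IsZero.iff_id_eq_zero, ← cancel_epi (p ≫ K.homologyπ m), h3]; simp
  exact h4.of_iso ((homologyFunctor A m).mapIso e.symm ≪≫ (homologyFunctorFactors A m).app K)

lemma shortExact_of_triangle (a : ℤ) (Tr : Triangle (DerivedCategory A))
    (hT : Tr ∈ distTriang (DerivedCategory A)) {X Y Z : A}
    (eX : Tr.obj₁ ≅ (singleFunctor A a).obj X) (eY : Tr.obj₂ ≅ (singleFunctor A a).obj Y)
    (eZ : Tr.obj₃ ≅ (singleFunctor A a).obj Z) :
    ∃ (f : X ⟶ Y) (g : Y ⟶ Z) (w : f ≫ g = 0), (ShortComplex.mk f g w).ShortExact := by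
  obtain ⟨f, hf⟩ := (singleFunctor A a).map_surjective (eX.inv ≫ Tr.mor₁ ≫ eY.hom)
  obtain ⟨g, hg⟩ := (singleFunctor A a).map_surjective (eY.inv ≫ Tr.mor₂ ≫ eZ.hom)
  have w : f ≫ g = 0 := by
    apply (singleFunctor A a).map_injective
    simp [hf, hg, comp_distTriang_mor_zero₁₂_assoc _ hT]
  have i1 : Tr.obj₁.IsLE a := TStructure.t.isLE_of_iso eX.symm a
  have i3 : Tr.obj₃.IsGE a := TStructure.t.isGE_of_iso eZ.symm a
  have : Mono f := by
    rw [Preadditive.mono_iff_cancel_zero]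
    intro P h hh
    have hz : (((singleFunctor A a).map h ≫ eX.inv) ≫ Tr.mor₁) = 0 := by
      rw [← cancel_mono eY.hom]
      simp only [Category.assoc, ← hf, ← Functor.map_comp, hh]
      simp
    obtain ⟨k, hk⟩ := Triangle.coyoneda_exact₂ _ (inv_rot_of_distTriang _ hT) _ hz
    have : Tr.invRotate.obj₁.IsGE (a + 1) := TStructure.t.isGE_shift Tr.obj₃ a (-1) (a + 1)
    rw [TStructure.t.zero k a (a + 1), zero_comp] at hk
    apply (singleFunctor A a).map_injective
    rw [← cancel_mono eX.inv, hk, Functor.map_zero, zero_comp]; rfl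
  have : Epi g := by
    rw [Preadditive.epi_iff_cancel_zero]
    intro P h hh
    have hz : Tr.mor₂ ≫ (eZ.hom ≫ (singleFunctor A a).map h) = 0 := by
      rw [← cancel_epi eY.inv]
      rw [← Category.assoc Tr.mor₂, ← Category.assoc, ← hg, ← Functor.map_comp, hh]
      simp
    obtain ⟨k, hk⟩ := Triangle.yoneda_exact₃ _ hT _ hz
    have : (Tr.obj₁⟦(1 : ℤ)⟧).IsLE (a - 1) := TStructure.t.isLE_shift Tr.obj₁ a 1 (a - 1)
    rw [TStructure.t.zero k (a - 1) a, comp_zero] at hk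
    apply (singleFunctor A a).map_injective
    rw [← cancel_epi eZ.hom, hk]; simp
  refine ⟨f, g, w, ?_⟩
  have hex : (ShortComplex.mk f g w).Exact := by
    apply ShortComplex.exact_of_f_is_kernel
    refine KernelFork.IsLimit.ofι' _ _ (fun {P} h hh => ?_)
    apply Classical.choice
    have hz : ((singleFunctor A a).map h ≫ eY.inv) ≫ Tr.mor₂ = 0 := by
      rw [← cancel_mono eZ.hom]
      simp only [Category.assoc, ← hg, ← Functor.map_comp]
      dsimp at hh
      rw [hh]
      simp
    obtain ⟨k, hk⟩ := Triangle.coyoneda_exact₂ _ hT _ hz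
    obtain ⟨l, hl⟩ := (singleFunctor A a).map_surjective (k ≫ eX.hom)
    refine ⟨l, ?_⟩
    apply (singleFunctor A a).map_injective
    rw [← cancel_mono eY.inv, hk]
    dsimp
    rw [Functor.map_comp, hl, hf]
    simp
  exact ShortComplex.ShortExact.mk' hex inferInstance inferInstance

lemma FilD_isGE : ∀ (k : ℕ) (a : ℤ) (C : DerivedCategory A), FilD T k a C → C.IsGE a
  | 0, a, C, h => by
      rw [isGE_iff]
      intro i _
      exact Functor.map_isZero _ h
  | k + 1, a, C, ⟨T', W, E, u', v', w', _, ⟨e⟩, hT, hW⟩ => by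
      have := FilD_isGE k (a + 1) W hW
      exact TStructure.t.isGE₂ _ hT a (TStructure.t.isGE_of_ge W a (a + 1))
        (TStructure.t.isGE_of_iso e.symm a)

lemma FilA_of_FilD : ∀ (k : ℕ) (a : ℤ) (X : DerivedCategory A) (C : A)
    (_ : X ≅ (singleFunctor A a).obj C), FilD T k a X → FilA T k C
  | 0, a, X, C, e, h => isZero_of_iso_single e h
  | k + 1, a, X, C, e, ⟨T', W, E, u', v', w', hT', ⟨e'⟩, hT, hW⟩ => by
      have i1 := FilD_isGE T k (a + 1) W hW
      have i2 : X.IsLE a := TStructure.t.isLE_of_iso e.symm a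
      have i3 : E.IsLE a := TStructure.t.isLE_of_iso e'.symm a
      have i4 : W.IsLE (a + 1) := TStructure.t.isLE₂ _ (inv_rot_of_distTriang _ hT) (a + 1)
        (TStructure.t.isLE_shift E a (-1) (a + 1)) (TStructure.t.isLE_of_le X a (a + 1))
      obtain ⟨C', ⟨eW⟩⟩ := exists_iso_singleFunctor_obj_of_isGE_of_isLE W (a + 1)
      obtain ⟨f, g, w, hs⟩ := shortExact_of_triangle a _ (rot_of_distTriang _ hT) e e'
        ((shiftFunctor _ (1 : ℤ)).mapIso eW ≪≫
          ((singleFunctors A).shiftIso 1 a (a + 1) (by lia)).app C')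
      exact ⟨T', C', f, g, w, hT', hs, FilA_of_FilD k (a + 1) W C' eW hW⟩

lemma ex_epi_left {X' X Y Z : A} (p : X' ⟶ X) [Epi p] (f : X ⟶ Y) (g : Y ⟶ Z) (w : f ≫ g = 0)
    (w' : (p ≫ f) ≫ g = 0) :
    (ShortComplex.mk (p ≫ f) g w').Exact ↔ (ShortComplex.mk f g w).Exact := by
  let φ : ShortComplex.mk (p ≫ f) g w' ⟶ ShortComplex.mk f g w :=
    { τ₁ := p, τ₂ := 𝟙 _, τ₃ := 𝟙 _, comm₁₂ := by simp, comm₂₃ := by simp }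
  have : Epi φ.τ₁ := by assumption
  have : IsIso φ.τ₂ := by dsimp [φ]; infer_instance
  have : Mono φ.τ₃ := by dsimp [φ]; infer_instance
  exact ShortComplex.exact_iff_of_epi_of_isIso_of_mono φ

lemma ex_mono_right {X Y Z Z' : A} (f : X ⟶ Y) (g : Y ⟶ Z) (i : Z ⟶ Z') [Mono i] (w : f ≫ g = 0)
    (w' : f ≫ (g ≫ i) = 0) :
    (ShortComplex.mk f (g ≫ i) w').Exact ↔ (ShortComplex.mk f g w).Exact := by
  let φ : ShortComplex.mk f g w ⟶ ShortComplex.mk f (g ≫ i) w' :=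
    { τ₁ := 𝟙 _, τ₂ := 𝟙 _, τ₃ := i, comm₁₂ := by simp, comm₂₃ := by simp }
  have : Epi φ.τ₁ := by dsimp [φ]; infer_instance
  have : IsIso φ.τ₂ := by dsimp [φ]; infer_instance
  have : Mono φ.τ₃ := by assumption
  exact (ShortComplex.exact_iff_of_epi_of_isIso_of_mono φ).symm

lemma exists_image {X Y Z P : A} (a : X ⟶ Y) (h : Y ⟶ P) (w : a ≫ h = 0)
    (hex : (ShortComplex.mk a h w).Exact) (p : X ⟶ Z) (i : Z ⟶ Y) [Epi p] [Mono i]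
    (ha : p ≫ i = a) :
    ∃ (J : A) (q : Y ⟶ J) (j : J ⟶ P) (w' : i ≫ q = 0), Epi q ∧ Mono j ∧ q ≫ j = h ∧
      (ShortComplex.mk i q w').ShortExact := by
  subst ha
  have w1 : i ≫ h = 0 := by rw [← cancel_epi p, ← Category.assoc, w, comp_zero]
  have h1 := (ex_epi_left p i h w1 w).1 hex
  obtain ⟨J, q, j, hq, hj, rfl⟩ : ∃ (J : A) (q : Y ⟶ J) (j : J ⟶ P), Epi q ∧ Mono j ∧ q ≫ j = h :=
    ⟨_, Abelian.factorThruImage h, Abelian.image.ι h, inferInstance, inferInstance,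
      Abelian.image.fac h⟩
  have w2 : i ≫ q = 0 := by rw [← cancel_mono j, Category.assoc, w1, zero_comp]
  have h2 := (ex_mono_right i q j w2 w1).1 h1
  exact ⟨J, q, j, w2, hq, hj, rfl, ShortComplex.ShortExact.mk' h2 inferInstance hq⟩

lemma FilA_of_coresolution : ∀ (n : ℕ) (S : ComposableArrows A (n + 1)) (_ : S.Exact)
    (_ : Epi (S.map' n (n + 1)))
    (_ : ∀ (i : ℕ) (_ : 1 ≤ i) (h2 : i ≤ n + 1), S.obj' i ∈ addT T)
    (Z : A) (p : S.obj' 0 ⟶ Z) (i : Z ⟶ S.obj' 1) (_ : Epi p) (_ : Mono i)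
    (_ : p ≫ i = S.map' 0 1), FilA T (n + 1) Z
  | 0, S, hS, he, ha, Z, p, i, hp, hi, hpi => by
      have : Epi (p ≫ i) := by rw [hpi]; exact he
      have : Epi i := epi_of_epi p i
      refine ⟨S.obj' 1, cokernel i, i, cokernel.π i, cokernel.condition i,
        ha 1 le_rfl le_rfl, ?_, isZero_cokernel_of_epi _⟩
      exact ShortComplex.ShortExact.mk' (ShortComplex.exact_cokernel _) hi
          (by dsimp; infer_instance)
  | n + 1, S, hS, he, ha, Z, p, i, hp, hi, hpi => by
      obtain ⟨J, q, j, w', hq, hj, hqj, hse⟩ := exists_image (S.map' 0 1) (S.map' 1 2)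
        (hS.toIsComplex.zero' 0 1 2) (hS.exact' 0 1 2) p i hpi
      have ih := FilA_of_coresolution n S.δ₀ hS.δ₀ he (fun j h1 h2 => ha (j + 1) (by lia) (by lia))
        J q j hq hj hqj
      exact ⟨S.obj' 1, J, i, q, w', ha 1 le_rfl (by lia), hse, ih⟩

lemma FilA_of_hasAddT (n : ℕ) (G : A) (h : hasAddTCoresolution T n G) : FilA T (n + 1) G := by
  obtain ⟨S, hS, hm, he, rfl, ha⟩ := h
  exact FilA_of_coresolution T n S hS he ha _ (𝟙 _) (S.map' 0 1) inferInstance hm (by simp)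

lemma exists_sequence : ∀ (n : ℕ) (M Y C : A) (f : M ⟶ Y) (q : Y ⟶ C) (w : f ≫ q = 0)
    (_ : (ShortComplex.mk f q w).Exact) (_ : Epi q) (_ : FilA T n C),
    ∃ (S : ComposableArrows A (n + 1)) (e0 : S.obj' 0 = M) (e1 : S.obj' 1 = Y),
      S.map' 0 1 = eqToHom e0 ≫ f ≫ eqToHom e1.symm ∧ S.Exact ∧ Epi (S.map' n (n + 1)) ∧
      ∀ (i : ℕ) (_ : 2 ≤ i) (h2 : i ≤ n + 1), S.obj' i ∈ addT T
  | 0, M, Y, C, f, q, w, hex, hq, hC => by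
      have hf : Epi f := (ShortComplex.exact_iff_epi _ (hC.eq_of_tgt _ _)).1 hex
      refine ⟨ComposableArrows.mk₁ f, rfl, rfl, ?_, ComposableArrows.exact₁ _, hf, ?_⟩
      · exact ((Category.id_comp _).trans (Category.comp_id f)).symm
      · intro i h1 h2; lia
  | n + 1, M, Y, C, f, q, w, hex, hq, ⟨T', C', i, g, wi, hT', hs, hC'⟩ => by
      have hi : Mono i := hs.mono_f
      have w' : (q ≫ i) ≫ g = 0 := by rw [Category.assoc, wi, comp_zero]
      have hex' := (ex_epi_left q i g wi w').2 hs.exact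
      obtain ⟨S, e0, e1, h01, hS, he, ha⟩ :=
        exists_sequence n Y T' C' (q ≫ i) g w' hex' hs.epi_g hC'
      subst e0 e1
      simp only [eqToHom_refl, Category.comp_id, Category.id_comp] at h01
      refine ⟨S.precomp f, rfl, rfl, ?_, ?_, he, ?_⟩
      · exact ((Category.id_comp _).trans (Category.comp_id f)).symm
      · have w2 : f ≫ q ≫ i = 0 := by rw [← Category.assoc, w, zero_comp]
        have hex2 := (ex_mono_right f q i w w2).2 hex
        refine ComposableArrows.exact_of_δ₀ ?_ hS
        have := hex2.exact_toComposableArrows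
        have h3 : (S.precomp f).map' 1 2 = q ≫ i := h01
        have h4 : (S.precomp f).map' 0 1 = f := rfl
        rw [h3, h4]
        exact this
      · intro j h1 h2
        obtain _ | _ | _ | j := j
        · lia
        · lia
        · exact hT'
        · exact ha (j + 2) (by lia) (by lia)

section

variable (hsame : ∀ I : Type v, IsIso (Sigma.desc
      (fun i : I => (DerivedCategory.singleFunctor A 0).map
        (Sigma.ι (fun _ : I => T) i))))
    (hext : ∀ (k : ℤ), 0 < k → ∀ I : Type v,
      ∀ f : (DerivedCategory.singleFunctor A 0).obj T ⟶
        ((DerivedCategory.singleFunctor A 0).obj (∐ (fun _ : I => T)))⟦k⟧, f = 0)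

include hsame in
lemma ext_zero (I : Type v) {X : DerivedCategory A}
    (φ : (singleFunctor A 0).obj (∐ (fun _ : I => T)) ⟶ X)
    (h : ∀ i, (singleFunctor A 0).map (Sigma.ι (fun _ : I => T) i) ≫ φ = 0) : φ = 0 := by
  have := hsame I
  rw [← cancel_epi (Sigma.desc (fun i : I => (DerivedCategory.singleFunctor A 0).map
        (Sigma.ι (fun _ : I => T) i)))]
  apply Sigma.hom_ext
  intro i
  simp [h]

include hsame in
lemma desc_zero (I : Type v) {X : DerivedCategory A}
    (e : I → ((singleFunctor A 0).obj T ⟶ X)) :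
    ∃ φ : (singleFunctor A 0).obj (∐ (fun _ : I => T)) ⟶ X,
      ∀ i, (singleFunctor A 0).map (Sigma.ι (fun _ : I => T) i) ≫ φ = e i := by
  have := hsame I
  refine ⟨inv (Sigma.desc (fun i : I => (DerivedCategory.singleFunctor A 0).map
        (Sigma.ι (fun _ : I => T) i))) ≫ Sigma.desc e, fun i => ?_⟩
  have h1 : (singleFunctor A 0).map (Sigma.ι (fun _ : I => T) i) =
      Sigma.ι (fun _ : I => (singleFunctor A 0).obj T) i ≫
        Sigma.desc (fun i : I => (DerivedCategory.singleFunctor A 0).map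
        (Sigma.ι (fun _ : I => T) i)) := by simp
  rw [h1, Category.assoc, IsIso.hom_inv_id_assoc]
  simp

include hsame in
lemma desc_single (m : ℤ) (I : Type v) {X : DerivedCategory A}
    (e : I → ((singleFunctor A m).obj T ⟶ X)) :
    ∃ φ : (singleFunctor A m).obj (∐ (fun _ : I => T)) ⟶ X,
      ∀ i, (singleFunctor A m).map (Sigma.ι (fun _ : I => T) i) ≫ φ = e i := by
  obtain ⟨φ₀, h₀⟩ := desc_zero T hsame I (X := X⟦m⟧)
    (fun i => ((singleFunctors A).shiftIso m 0 m (by simp)).inv.app T ≫ (e i)⟦m⟧')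
  obtain ⟨φ, rfl⟩ := exists_of_shift m 0 m (by simp) φ₀
  refine ⟨φ, fun i => ?_⟩
  apply (shiftFunctor (DerivedCategory A) m).map_injective
  rw [← cancel_epi (((singleFunctors A).shiftIso m 0 m (by simp)).inv.app T)]
  rw [← h₀ i, Functor.map_comp]
  have := ((singleFunctors A).shiftIso m 0 m (by simp)).inv.naturality
    (Sigma.ι (fun _ : I => T) i)
  dsimp at this
  rw [reassoc_of% this]

include hext in
lemma addT_hom_zero {T' : A} (hT' : T' ∈ addT T) (j a : ℤ) (hja : j ≠ a)
    (f : (singleFunctor A j).obj T ⟶ (singleFunctor A a).obj T') : f = 0 := by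
  rcases lt_or_gt_of_ne hja with h | h
  · exact TStructure.t.zero f j a
  · obtain ⟨I, s, r, hs⟩ := hT'
    have key : ∀ f : (singleFunctor A j).obj T ⟶ (singleFunctor A a).obj (∐ (fun _ : I => T)),
        f = 0 := by
      apply zero_of_unshift j 0 j (by simp)
      intro g
      let e : ((singleFunctor A a).obj (∐ (fun _ : I => T)))⟦j⟧ ≅
          ((singleFunctor A 0).obj (∐ (fun _ : I => T)))⟦j - a⟧ :=
        (shiftFunctor (DerivedCategory A) j).mapIso
          ((((singleFunctors A).shiftIso (-a) a 0 (by simp)).app (∐ (fun _ : I => T))).symm) ≪≫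
          ((shiftFunctorAdd' (DerivedCategory A) (-a) j (j - a) (by lia)).symm.app _)
      rw [← cancel_mono e.hom, zero_comp]
      exact hext (j - a) (by lia) I _
    have h2 := key (f ≫ (singleFunctor A a).map s)
    have h3 : f = (f ≫ (singleFunctor A a).map s) ≫ (singleFunctor A a).map r := by
      rw [Category.assoc, ← Functor.map_comp, hs]; simp
    rw [h3, h2, zero_comp]

include hext in
lemma addT_small {T' : A} (hT' : T' ∈ addT T) (j a : ℤ) :
    Small.{v} ((singleFunctor A j).obj T ⟶ (singleFunctor A a).obj T') := by
  by_cases h : j = a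
  · subst h
    exact small_of_surjective (f := fun g : T ⟶ T' => (singleFunctor A j).map g)
      (singleFunctor A j).map_surjective
  · exact small_of_surjective (f := fun _ : PUnit.{v + 1} => 0)
      (fun f => ⟨PUnit.unit, (addT_hom_zero T hext hT' j a h f).symm⟩)

lemma coprod_mem (I : Type v) : (∐ (fun _ : I => T)) ∈ addT T := ⟨I, 𝟙 _, 𝟙 _, by simp⟩

include hsame in
lemma FilA_hom_zero (X : DerivedCategory A)
    (hX : ∀ j : ℤ, 0 < j → ∀ f : (singleFunctor A j).obj T ⟶ X, f = 0) :
    ∀ (k : ℕ) (G : A) (_ : FilA T k G) (m : ℤ) (_ : 0 < m)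
      (f : (singleFunctor A 0).obj G ⟶ X⟦m⟧), f = 0
  | 0, G, hG, m, hm, f => (Functor.map_isZero (singleFunctor A 0) hG).eq_of_src _ _
  | k + 1, G, ⟨T', C', i, g, w, hT', hs, hC'⟩, m, hm, f => by
      have ih := FilA_hom_zero X hX k C' hC'
      have hT0 : ∀ h : (singleFunctor A 0).obj T' ⟶ X⟦m⟧, h = 0 := by
        intro h
        obtain ⟨I, s, r, hs⟩ := hT'
        have h2 : (singleFunctor A 0).map r ≫ h = 0 := by
          apply ext_zero T hsame
          intro i
          exact zero_of_shift m 0 m (by simp) (hX m hm) _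
        have h3 : h = (singleFunctor A 0).map s ≫ (singleFunctor A 0).map r ≫ h := by
          rw [← Category.assoc, ← Functor.map_comp, hs]; simp
        rw [h3, h2, comp_zero]
      have hd := hs.singleTriangle_distinguished
      have h0 : hs.singleTriangle.mor₃ ≫ f⟦(1 : ℤ)⟧' = 0 := by
        let e := (shiftFunctorAdd' (DerivedCategory A) m 1 (m + 1) rfl).symm.app X
        rw [← cancel_mono e.hom, zero_comp]
        exact ih (m + 1) (by lia) _
      obtain ⟨h, hh⟩ := Triangle.yoneda_exact₃ _ (rot_of_distTriang _ hd) (f⟦(1 : ℤ)⟧') h0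
      obtain ⟨h', rfl⟩ := (shiftFunctor (DerivedCategory A) (1 : ℤ)).map_surjective h
      apply (shiftFunctor (DerivedCategory A) (1 : ℤ)).map_injective
      have h5 : h' = 0 := hT0 h'
      have h6 : (shiftFunctor (DerivedCategory A) (1 : ℤ)).map h' = 0 := by
        rw [h5, Functor.map_zero]
      have h7 := hh.trans (by rw [h6, comp_zero])
      exact h7.trans (Functor.map_zero _ _ _).symm

include hext in
lemma FilA_small : ∀ (k : ℕ) (G : A) (_ : FilA T k G) (j : ℤ),
    Small.{v} ((singleFunctor A j).obj T ⟶ (singleFunctor A 0).obj G)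
  | 0, G, hG, j => small_of_surjective (f := fun _ : PUnit.{v + 1} => 0)
      (fun f => ⟨PUnit.unit, (Functor.map_isZero (singleFunctor A 0) hG).eq_of_tgt _ _⟩)
  | k + 1, G, ⟨T', C', i, g, w, hT', hs, hC'⟩, j => by
      have ih := FilA_small k C' hC' (-1 + j)
      have hd := hs.singleTriangle_distinguished
      refine small_triangle _ _ (inv_rot_of_distTriang _ hd) ?_ ?_
      · exact small_of_shift (-1) j _ rfl ih
      · exact addT_small T hext hT' j 0

include hext in
lemma A_small (n : ℕ)
    (hpd : ∀ (k : ℤ), (n : ℤ) < k → ∀ N : A,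
      ∀ f : (DerivedCategory.singleFunctor A 0).obj T ⟶
        ((DerivedCategory.singleFunctor A 0).obj N)⟦k⟧, f = 0)
    (𝒢 : Set A) (h𝒢 : ∀ M : A, ∃ G ∈ 𝒢, ∃ p : G ⟶ M, Epi p)
    (hG : ∀ G ∈ 𝒢, hasAddTCoresolution T n G) :
    ∀ (d : ℕ) (j : ℤ) (_ : (n : ℤ) + 1 - d ≤ j) (N : A),
      Small.{v} ((singleFunctor A j).obj T ⟶ (singleFunctor A 0).obj N)
  | 0, j, hj, N => small_of_surjective (f := fun _ : PUnit.{v + 1} => 0)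
      (fun f => ⟨PUnit.unit, (zero_of_unshift j 0 j (by simp)
        (hpd j (by push_cast at hj; lia) N) f).symm⟩)
  | d + 1, j, hj, N => by
      obtain ⟨G, hGm, p, hp⟩ := h𝒢 N
      have hs : (ShortComplex.mk (kernel.ι p) p (kernel.condition p)).ShortExact :=
        ShortComplex.ShortExact.mk' (ShortComplex.exact_kernel p) (by dsimp; infer_instance) hp
      have hd := hs.singleTriangle_distinguished
      refine small_triangle _ _ (rot_of_distTriang _ hd) ?_ ?_
      · exact FilA_small T hext _ G (FilA_of_hasAddT T n G (hG G hGm)) j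
      · exact small_of_shift 1 j (1 + j) rfl
          (A_small n hpd 𝒢 h𝒢 hG d (1 + j) (by push_cast at hj; lia) (kernel p))

include hsame hext in
lemma main_step : ∀ (k : ℕ) (a : ℤ) (X : DerivedCategory A)
    (_ : ∀ j : ℤ, Small.{v} ((singleFunctor A j).obj T ⟶ X))
    (_ : ∀ j : ℤ, a + k < j → ∀ f : (singleFunctor A j).obj T ⟶ X, f = 0),
    ∃ (Y C : DerivedCategory A) (α : X ⟶ Y) (β : Y ⟶ C) (γ : C ⟶ X⟦(1 : ℤ)⟧),
      Triangle.mk α β γ ∈ distTriang (DerivedCategory A) ∧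
      (∀ j : ℤ, Small.{v} ((singleFunctor A j).obj T ⟶ Y)) ∧
      (∀ j : ℤ, a < j → ∀ f : (singleFunctor A j).obj T ⟶ Y, f = 0) ∧ FilD T k a C
  | 0, a, X, hs, hz => ⟨X, _, 𝟙 X, 0, 0, contractible_distinguished X, hs,
      fun j hj f => hz j (by simpa using hj) f, isZero_zero _⟩
  | k + 1, a, X, hs, hz => by
      obtain ⟨X1, C1, α, β, γ, hT1, hs1, hz1, hF⟩ := main_step k (a + 1) X hs
        (fun j hj => hz j (by push_cast; lia))
      have := hs1 (a + 1)
      let J := Shrink.{v} ((singleFunctor A (a + 1)).obj T ⟶ X1)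
      obtain ⟨φ, hφ⟩ := desc_single T hsame (a + 1) J (fun x => (equivShrink _).symm x)
      obtain ⟨Y, g, h, hT2⟩ := distinguished_cocone_triangle φ
      obtain ⟨C, β', γ', hT3⟩ := distinguished_cocone_triangle (α ≫ g)
      have hT2r := rot_of_distTriang _ hT2
      have hJ := coprod_mem T J
      refine ⟨Y, C, α ≫ g, β', γ', hT3, fun j => ?_, fun j hj f => ?_, ?_⟩
      · exact small_triangle _ _ hT2r (hs1 j)
          (small_of_shift 1 j (1 + j) rfl (addT_small T hext hJ (1 + j) (a + 1)))
      · have h1 : f ≫ h = 0 := zero_of_shift 1 j (1 + j) rfl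
          (addT_hom_zero T hext hJ (1 + j) (a + 1) (by lia)) _
        obtain ⟨f', hf'⟩ : ∃ f' : (singleFunctor A j).obj T ⟶ X1, f = f' ≫ g :=
          Triangle.coyoneda_exact₂ _ hT2r f h1
        rw [hf']
        have h2 : φ ≫ g = 0 := comp_distTriang_mor_zero₁₂ _ hT2
        by_cases hja : j = a + 1
        · subst hja
          have h3 := hφ (equivShrink _ f')
          simp only [Equiv.symm_apply_apply] at h3
          rw [← h3, Category.assoc, h2, comp_zero]
        · rw [hz1 j (by lia) f', zero_comp]
      · let o := Triangulated.someOctahedron rfl hT1 hT2r hT3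
        exact ⟨_, C1, _, _, _, _, hJ,
          ⟨((singleFunctors A).shiftIso 1 a (a + 1) (by lia)).app _⟩, o.mem, hF⟩

end

end Tilt

/-- Let `T` be an `n`-tilting object of an abelian category `A` whose derived category has
Hom sets and coproducts, i.e.: (T0) coproducts of copies of `T` agree in `A` and `D(A)`;
(T1) `Ext^k_A(T, T^{(I)}) = 0` for `k > 0`; (T2) `T` has projective dimension `≤ n`;
(T3) some generating class `𝒢` of `A` admits `Add(T)`-coresolutions of length `n`.
Let `H_T = T^{⊥>0} ∩ T^{⊥<0}` be the heart of the associated t-structure.  Then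
`Y = ⋂_{k>0} Ker Ext^k(T,-)` coincides with `A ∩ H_T`, `Y` is a cogenerating class of `A`,
and every object `M` of `A` admits an exact sequence `0 → M → Y → T^1 → ⋯ → T^n → 0` with
`Y ∈ 𝒴` and all `T^k ∈ Add(T)`. -/
theorem stmt15 (n : ℕ)
    (hsame : ∀ I : Type v, IsIso (Sigma.desc
      (fun i : I => (DerivedCategory.singleFunctor A 0).map
        (Sigma.ι (fun _ : I => T) i))))
    (hext : ∀ (k : ℤ), 0 < k → ∀ I : Type v,
      ∀ f : (DerivedCategory.singleFunctor A 0).obj T ⟶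
        ((DerivedCategory.singleFunctor A 0).obj (∐ (fun _ : I => T)))⟦k⟧, f = 0)
    (hpd : ∀ (k : ℤ), (n : ℤ) < k → ∀ N : A,
      ∀ f : (DerivedCategory.singleFunctor A 0).obj T ⟶
        ((DerivedCategory.singleFunctor A 0).obj N)⟦k⟧, f = 0)
    (hT3 : ∃ 𝒢 : Set A, (∀ M : A, ∃ G ∈ 𝒢, ∃ p : G ⟶ M, Epi p) ∧
      ∀ G ∈ 𝒢, hasAddTCoresolution T n G) :
    -- `Y` coincides with `A ∩ H_T` ...
    (YSet T = {N : A |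
      (∀ k : ℤ, 0 < k → ∀ f : (DerivedCategory.singleFunctor A 0).obj T ⟶
        ((DerivedCategory.singleFunctor A 0).obj N)⟦k⟧, f = 0) ∧
      (∀ k : ℤ, k < 0 → ∀ f : (DerivedCategory.singleFunctor A 0).obj T ⟶
        ((DerivedCategory.singleFunctor A 0).obj N)⟦k⟧, f = 0)}) ∧
    -- ... `Y` is a cogenerating class ...
    (∀ M : A, ∃ Y ∈ YSet T, ∃ ι : M ⟶ Y, Mono ι) ∧
    -- ... and every object admits an exact sequence `0 → M → Y → T^1 → ⋯ → T^n → 0`.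
    (∀ M : A, ∃ S : ComposableArrows A (n + 1), S.Exact ∧ Mono (S.map' 0 1) ∧
      Epi (S.map' n (n + 1)) ∧ S.obj' 0 = M ∧ S.obj' 1 ∈ YSet T ∧
      ∀ (i : ℕ) (_ : 2 ≤ i) (h2 : i ≤ n + 1), S.obj' i ∈ addT T) := by
  obtain ⟨𝒢, h𝒢, hG⟩ := hT3
  have key : ∀ M : A, ∃ (Y C : A) (f : M ⟶ Y) (q : Y ⟶ C) (w : f ≫ q = 0),
      (ShortComplex.mk f q w).ShortExact ∧ Y ∈ YSet T ∧ Tilt.FilA T n C := by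
    intro M
    obtain ⟨Y, C, α, β, γ, hT, -, hz, hF⟩ := Tilt.main_step T hsame hext n 0
      ((DerivedCategory.singleFunctor A 0).obj M)
      (fun j => Tilt.A_small T hext n hpd 𝒢 h𝒢 hG ((n : ℤ) + 1 - j).toNat j (by lia) M)
      (fun j hj f => Tilt.zero_of_unshift j 0 j (by simp) (hpd j (by lia) M) f)
    have hC0 := Tilt.FilD_isGE T n 0 C hF
    have hY0 : Y.IsGE 0 := DerivedCategory.TStructure.t.isGE₂ _ hT 0
      (inferInstanceAs (((DerivedCategory.singleFunctor A 0).obj M).IsGE 0)) hC0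
    have hY1 : Y.IsLE 0 := by
      refine Tilt.isLE_of_hom_zero 𝒢 h𝒢 Y (fun G hGm m hm => ?_)
      exact Tilt.zero_of_unshift m 0 m (by simp) (Tilt.FilA_hom_zero T hsame Y hz (n + 1) G
        (Tilt.FilA_of_hasAddT T n G (hG G hGm)) m hm)
    have hM : (((DerivedCategory.singleFunctor A 0).obj M)⟦(1 : ℤ)⟧).IsLE 0 :=
      have := DerivedCategory.TStructure.t.isLE_shift
        ((DerivedCategory.singleFunctor A 0).obj M) 0 1 (-1)
      DerivedCategory.TStructure.t.isLE_of_le _ (-1) 0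
    have hC1 : C.IsLE 0 :=
      DerivedCategory.TStructure.t.isLE₂ _ (rot_of_distTriang _ hT) 0 hY1 hM
    obtain ⟨Y', ⟨eY⟩⟩ := DerivedCategory.exists_iso_singleFunctor_obj_of_isGE_of_isLE Y 0
    obtain ⟨C', ⟨eC⟩⟩ := DerivedCategory.exists_iso_singleFunctor_obj_of_isGE_of_isLE C 0
    obtain ⟨f, q, w, hse⟩ := Tilt.shortExact_of_triangle 0 _ hT (Iso.refl _) eY eC
    refine ⟨Y', C', f, q, w, hse, ?_, Tilt.FilA_of_FilD T n 0 C C' eC hF⟩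
    intro k hk
    refine Tilt.zero_of_shift k 0 k (by simp) (fun g => ?_)
    rw [← cancel_mono eY.inv, zero_comp]
    exact hz k hk _
  refine ⟨?_, ?_, ?_⟩
  · ext N
    refine ⟨fun h => ⟨h, fun k hk => ?_⟩, fun h => h.1⟩
    refine Tilt.zero_of_shift k 0 k (by simp) (fun g => ?_)
    exact DerivedCategory.TStructure.t.zero g k 0
  · intro M
    obtain ⟨Y, C, f, q, w, hse, hY, -⟩ := key M
    exact ⟨Y, hY, f, hse.mono_f⟩
  · intro M
    obtain ⟨Y, C, f, q, w, hse, hY, hC⟩ := key M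
    have hf : Mono f := hse.mono_f
    obtain ⟨S, e0, e1, h01, hS, he, ha⟩ :=
      Tilt.exists_sequence T n M Y C f q w hse.exact hse.epi_g hC
    refine ⟨S, hS, ?_, he, e0, ?_, ha⟩
    · rw [h01]; infer_instance
    · rw [e1]; exact hY
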